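/- Let λ ∈ (0,1) and let D(λ) and Q be as in the block form, with Q^p = I_n. Let s̄_k ∈ ℝⁿ be a p-periodic sequence, decomposed into blocks s̄_k = (s̄_{a,k}, s̄_{b,k}, s̄_{c,k}) of sizes a, b, c, and suppose that Σ_{j=0}^{p−1} Q_a^j s̄_{a,k+j} = 0 for all k. Define x̄_k ∈ ℝⁿ blockwise by: x̄_{b,k} = (λ^p − 1)^{−1} Σ_{j=0}^{p−1} λ^j Q_b^j s̄_{b,k+j}, x̄_{c,k} = (λ^{p d_n} − 1)^{−1} Σ_{j=0}^{p−1} λ^{j d_n} Q_c^j s̄_{c,k+j}, x̄_{a,0} = 0, and x̄_{a,k} = Q_a^{−k} Σ_{j=0}^{k−1} Q_a^j s̄_{a,j} for k > 0. Then s̄_k = Q D(λ) x̄_{k+1} − x̄_k for all k ∈ ℕ. -/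

import Mathlib

/-!
The matrix `Q D(λ)` is block diagonal with blocks `Q_a`, `λ Q_b`, `λ^{dn} Q_c`, so the identity splits
into three independent recurrences.

On the blocks `b` and `c` the block has the form `μ Q` with `Q ^ p = 1`, and `x̄_k` is
`(μ ^ p - 1)⁻¹ ∑_{j < p} (μ Q) ^ j s̄_{k+j}`. Applying `μ Q` to `x̄_{k+1}` shifts the index of the sum
by one; the sum telescopes against that of `x̄_k`, leaving the boundary terms
`(μ Q) ^ p s̄_{k+p} - s̄_k = (μ ^ p - 1) s̄_k` (`periodic_block`). On the block `a` the sum for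
`x̄_{k+1}` has just one more term than that for `x̄_k`, and invertibility of `Q_a` suffices
(`partial_sum_block`).
-/

open Matrix Finset

/-- The index type for `ℝⁿ` with `n = a + b + c`, split in three blocks. -/
abbrev Idx (a b c : ℕ) := Fin a ⊕ (Fin b ⊕ Fin c)

/-- The diagonal exponents of `D(λ)`. -/
def dExp (a b c dn : ℕ) : Idx a b c → ℕ :=
  Sum.elim (fun _ => 0) (Sum.elim (fun _ => 1) fun _ => dn)

/-- `D(λ) = diag(I_a, λ I_b, λ^{dn} I_c)`. -/
noncomputable def DMat (a b c dn : ℕ) (l : ℝ) : Matrix (Idx a b c) (Idx a b c) ℝ :=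
  Matrix.diagonal fun i => l ^ dExp a b c dn i

/-- `Q = diag(Q_a, Q_b, Q_c)`, block diagonal. -/
def QMat {a b c : ℕ} (Qa : Matrix (Fin a) (Fin a) ℝ) (Qb : Matrix (Fin b) (Fin b) ℝ)
    (Qc : Matrix (Fin c) (Fin c) ℝ) : Matrix (Idx a b c) (Idx a b c) ℝ :=
  Matrix.fromBlocks Qa 0 0 (Matrix.fromBlocks Qb 0 0 Qc)

/-- The recurrence on a contracted block, where the scaling `m` satisfies `m ^ p ≠ 1`. -/
lemma periodic_block {n : ℕ} (Q : Matrix (Fin n) (Fin n) ℝ) (p : ℕ) (hQ : Q ^ p = 1)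
    (m : ℝ) (hm : m ^ p ≠ 1) (s x : ℕ → Fin n → ℝ) (hs : ∀ k, s (k + p) = s k)
    (hx : ∀ k, x k = (m ^ p - 1)⁻¹ • ∑ j ∈ Finset.range p, m ^ j • ((Q ^ j) *ᵥ s (k + j)))
    (k : ℕ) : s k = m • (Q *ᵥ x (k + 1)) - x k := by
  have hshift : m • (Q *ᵥ ∑ j ∈ Finset.range p, m ^ j • ((Q ^ j) *ᵥ s (k + 1 + j)))
      = ∑ j ∈ Finset.range p, m ^ (j + 1) • ((Q ^ (j + 1)) *ᵥ s (k + (j + 1))) := by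
    rw [Matrix.mulVec_sum, Finset.smul_sum]
    refine Finset.sum_congr rfl fun j _ => ?_
    rw [Matrix.mulVec_smul, Matrix.mulVec_mulVec, smul_smul, ← pow_succ', ← pow_succ',
      add_assoc, add_comm 1 j]
  have htel := Finset.sum_range_sub (fun j => m ^ j • ((Q ^ j) *ᵥ s (k + j))) p
  simp only [Finset.sum_sub_distrib, hQ, hs, pow_zero, Matrix.one_mulVec, one_smul,
    add_zero] at htel
  rw [hx (k + 1), hx k, Matrix.mulVec_smul, smul_comm, hshift, ← smul_sub, htel]
  have hne : m ^ p - 1 ≠ 0 := sub_ne_zero.mpr hm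
  ext i
  simp only [Pi.smul_apply, Pi.sub_apply, smul_eq_mul]
  field_simp

/-- The recurrence on the block without contraction. -/
lemma partial_sum_block {n : ℕ} (Q : Matrix (Fin n) (Fin n) ℝ) (hQ : IsUnit Q.det)
    (s x : ℕ → Fin n → ℝ)
    (hx : ∀ k, x k = (Q ^ k)⁻¹ *ᵥ ∑ j ∈ Finset.range k, (Q ^ j) *ᵥ s j)
    (k : ℕ) : s k = Q *ᵥ x (k + 1) - x k := by
  have hk : IsUnit (Q ^ k).det := by rw [Matrix.det_pow]; exact hQ.pow k
  have hinv : Q * (Q ^ (k + 1))⁻¹ = (Q ^ k)⁻¹ := by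
    rw [pow_succ, Matrix.mul_inv_rev, ← mul_assoc, Matrix.mul_nonsing_inv _ hQ, one_mul]
  rw [hx (k + 1), hx k, Matrix.mulVec_mulVec, hinv, Finset.sum_range_succ, Matrix.mulVec_add,
    Matrix.mulVec_mulVec, Matrix.nonsing_inv_mul _ hk, Matrix.one_mulVec, add_sub_cancel_left]

lemma QMat_pow {a b c : ℕ} (Qa : Matrix (Fin a) (Fin a) ℝ) (Qb : Matrix (Fin b) (Fin b) ℝ)
    (Qc : Matrix (Fin c) (Fin c) ℝ) (p : ℕ) :
    QMat Qa Qb Qc ^ p = QMat (Qa ^ p) (Qb ^ p) (Qc ^ p) := by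
  simp only [QMat, Matrix.fromBlocks_diagonal_pow]

/-- The action of `Q D(λ)` in block coordinates. -/
lemma QD_mulVec {a b c : ℕ} (dn : ℕ) (l : ℝ) (Qa : Matrix (Fin a) (Fin a) ℝ)
    (Qb : Matrix (Fin b) (Fin b) ℝ) (Qc : Matrix (Fin c) (Fin c) ℝ) (v : Idx a b c → ℝ) :
    (QMat Qa Qb Qc * DMat a b c dn l) *ᵥ v =
      Sum.elim (Qa *ᵥ fun i => v (Sum.inl i))
        (Sum.elim (l • (Qb *ᵥ fun i => v (Sum.inr (Sum.inl i))))
          (l ^ dn • (Qc *ᵥ fun i => v (Sum.inr (Sum.inr i))))) := by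
  rw [← Matrix.mulVec_mulVec]
  ext i
  rcases i with i | i | i <;>
    simp [QMat, DMat, dExp, Matrix.mulVec, dotProduct, Matrix.diagonal_apply, Finset.mul_sum,
      mul_left_comm]

/-- Lemma 3.4 of the paper: the normalized iterates `x̄_k` built blockwise
from the normalized steps `s̄_k` satisfy `s̄_k = Q D(λ) x̄_{k+1} − x̄_k`. -/
theorem iterates_from_steps_stmt5 (a b c : ℕ) (ha : 0 < a) (hb : 0 < b) (hc : 0 < c)
    (dn : ℕ) (hdn : 0 < dn) (l : ℝ) (hl0 : 0 < l) (hl1 : l < 1)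
    (Qa : Matrix (Fin a) (Fin a) ℝ) (Qb : Matrix (Fin b) (Fin b) ℝ)
    (Qc : Matrix (Fin c) (Fin c) ℝ)
    (hQa : Qa * Qaᵀ = 1) (hQb : Qb * Qbᵀ = 1) (hQc : Qc * Qcᵀ = 1)
    (p : ℕ) (hp : 0 < p) (hQp : QMat Qa Qb Qc ^ p = 1)
    (sb : ℕ → Idx a b c → ℝ) (hsp : ∀ k, sb (k + p) = sb k)
    (hsum : ∀ k, ∑ j ∈ Finset.range p, (Qa ^ j) *ᵥ (fun i => sb (k + j) (Sum.inl i)) = 0)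
    (xb : ℕ → Idx a b c → ℝ)
    (hxa : ∀ k, (fun i => xb k (Sum.inl i)) =
      (Qa ^ k)⁻¹ *ᵥ ∑ j ∈ Finset.range k, (Qa ^ j) *ᵥ (fun i => sb j (Sum.inl i)))
    (hxb : ∀ k, (fun i => xb k (Sum.inr (Sum.inl i))) =
      (l ^ p - 1)⁻¹ • ∑ j ∈ Finset.range p,
        l ^ j • ((Qb ^ j) *ᵥ (fun i => sb (k + j) (Sum.inr (Sum.inl i)))))
    (hxc : ∀ k, (fun i => xb k (Sum.inr (Sum.inr i))) =
      (l ^ (p * dn) - 1)⁻¹ • ∑ j ∈ Finset.range p,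
        l ^ (j * dn) • ((Qc ^ j) *ᵥ (fun i => sb (k + j) (Sum.inr (Sum.inr i))))) :
    ∀ k, sb k = (QMat Qa Qb Qc * DMat a b c dn l) *ᵥ xb (k + 1) - xb k := by
  have hblocks : QMat (Qa ^ p) (Qb ^ p) (Qc ^ p) = QMat 1 1 1 := by
    rw [← QMat_pow, hQp]
    simp [QMat]
  obtain ⟨-, -, -, hbc⟩ := Matrix.fromBlocks_inj.mp hblocks
  obtain ⟨hQbp, -, -, hQcp⟩ := Matrix.fromBlocks_inj.mp hbc
  have hdet : IsUnit Qa.det := Matrix.isUnit_det_of_right_inverse hQa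
  have hlb : l ^ p ≠ 1 := (pow_lt_one₀ hl0.le hl1 hp.ne').ne
  have hlc : (l ^ dn) ^ p ≠ 1 :=
    (pow_lt_one₀ (pow_pos hl0 dn).le (pow_lt_one₀ hl0.le hl1 hdn.ne') hp.ne').ne
  intro k
  have hA := partial_sum_block Qa hdet (fun k i => sb k (Sum.inl i))
    (fun k i => xb k (Sum.inl i)) hxa k
  have hB := periodic_block Qb p hQbp l hlb (fun k i => sb k (Sum.inr (Sum.inl i)))
    (fun k i => xb k (Sum.inr (Sum.inl i))) (fun k => by simp only [hsp]) hxb k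
  have hC := periodic_block Qc p hQcp (l ^ dn) hlc (fun k i => sb k (Sum.inr (Sum.inr i)))
    (fun k i => xb k (Sum.inr (Sum.inr i))) (fun k => by simp only [hsp])
    (fun k => by simpa only [← pow_mul, mul_comm dn] using hxc k) k
  rw [QD_mulVec]
  ext i
  rcases i with i | i | i
  · exact congrFun hA i
  · exact congrFun hB i
  · exact congrFun hC i
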